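/- arXiv:2312.10598 — 3 statements merged into one kernel-verified Lean document; each statement's English description precedes it below -/
import Mathlib

section
/- Let E and F be real normed vector spaces, let U ⊆ E be an open convex set containing 0, and let f : E → F be twice continuously differentiable on U with f(0) = 0 and Df(0) = 0, and suppose the second differential is K-Lipschitz on U, i.e., ‖D²f(a) − D²f(b)‖ ≤ K‖a − b‖ for all a, b ∈ U (operator norm). Then for all x, y ∈ E such that tx ∈ U and tx + y ∈ U for every t ∈ [0, 1], one has ‖f(x + y) − f(y) − Df(y)(x) − f(x)‖ ≤ (K/2)‖x‖²‖y‖. -/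
/-- if f is twice continuously differentiable on an open convex
    set U containing 0, with f(0) = 0, Df(0) = 0, and K-Lipschitz second
    differential on U, then for x, y with the segments tx and tx + y (t ∈ [0,1])
    inside U, one has ‖f(x+y) − f(y) − Df(y)(x) − f(x)‖ ≤ (K/2)‖x‖²‖y‖. -/
theorem second_deriv_lipschitz_taylor_bound
    {E F : Type*} [NormedAddCommGroup E] [NormedSpace ℝ E]
    [NormedAddCommGroup F] [NormedSpace ℝ F]
    (U : Set E) (hU : IsOpen U) (hUconv : Convex ℝ U) (hU0 : (0 : E) ∈ U)
    (f : E → F) (f' : E → E →L[ℝ] F) (f'' : E → E →L[ℝ] E →L[ℝ] F) (K : ℝ)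
    (hK : 0 ≤ K)
    (hf' : ∀ a ∈ U, HasFDerivAt f (f' a) a)
    (hf'' : ∀ a ∈ U, HasFDerivAt f' (f'' a) a)
    (hf'cont : ContinuousOn f'' U)
    (hf0 : f 0 = 0) (hf'0 : f' 0 = 0)
    (hLip : ∀ a ∈ U, ∀ b ∈ U, ‖f'' a - f'' b‖ ≤ K * ‖a - b‖)
    (x y : E)
    (hseg : ∀ t ∈ Set.Icc (0 : ℝ) 1, t • x ∈ U ∧ t • x + y ∈ U) :
    ‖f (x + y) - f y - f' y x - f x‖ ≤ (K / 2) * ‖x‖ ^ 2 * ‖y‖ := by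
  have hp : ∀ (c : E) (t : ℝ), HasDerivAt (fun t : ℝ => t • x + c) x t := fun c t => by
    simpa using ((hasDerivAt_id t).smul_const x).add_const c
  have hp0 : ∀ t : ℝ, HasDerivAt (fun t : ℝ => t • x) x t := fun t => by
    simpa using (hasDerivAt_id t).smul_const x
  set C : ℝ := K * ‖y‖ * ‖x‖ ^ 2 with hC
  let g : ℝ → F := fun t => f (t • x + y) - f y - t • f' y x - f (t • x)
  let g' : ℝ → F := fun t => f' (t • x + y) x - f' y x - f' (t • x) x
  let g'' : ℝ → F := fun t => f'' (t • x + y) x x - f'' (t • x) x x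
  have hg : ∀ t ∈ Set.Icc (0 : ℝ) 1, HasDerivAt g (g' t) t := by
    intro t ht
    have h1 := (hf' _ (hseg t ht).2).comp_hasDerivAt t (hp y t)
    have h2 := (hf' _ (hseg t ht).1).comp_hasDerivAt t (hp0 t)
    have h3 : HasDerivAt (fun t : ℝ => t • f' y x) (f' y x) t := by
      simpa using (hasDerivAt_id t).smul_const (f' y x)
    exact ((h1.sub_const (f y)).sub h3).sub h2
  have hg' : ∀ t ∈ Set.Icc (0 : ℝ) 1, HasDerivAt g' (g'' t) t := by
    intro t ht
    have h1 : HasDerivAt (fun t : ℝ => f' (t • x + y) x) (f'' (t • x + y) x x) t := by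
      have h : HasDerivAt (fun t : ℝ => f' (t • x + y)) (f'' (t • x + y) x) t :=
        (hf'' _ (hseg t ht).2).comp_hasDerivAt t (hp y t)
      exact (ContinuousLinearMap.apply ℝ F x).hasFDerivAt.comp_hasDerivAt t h
    have h2 : HasDerivAt (fun t : ℝ => f' (t • x) x) (f'' (t • x) x x) t := by
      have h : HasDerivAt (fun t : ℝ => f' (t • x)) (f'' (t • x) x) t :=
        (hf'' _ (hseg t ht).1).comp_hasDerivAt t (hp0 t)
      exact (ContinuousLinearMap.apply ℝ F x).hasFDerivAt.comp_hasDerivAt t h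
    exact (h1.sub_const (f' y x)).sub h2
  have b2 : ∀ t ∈ Set.Icc (0 : ℝ) 1, ‖g'' t‖ ≤ C := by
    intro t ht
    have h := hLip _ (hseg t ht).2 _ (hseg t ht).1
    rw [add_sub_cancel_left] at h
    have h2 := (f'' (t • x + y) - f'' (t • x)).le_opNorm₂ x x
    calc ‖g'' t‖ = ‖(f'' (t • x + y) - f'' (t • x)) x x‖ := by simp [g'']
      _ ≤ ‖f'' (t • x + y) - f'' (t • x)‖ * ‖x‖ * ‖x‖ := h2
      _ ≤ (K * ‖y‖) * ‖x‖ * ‖x‖ := by gcongr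
      _ = C := by rw [hC]; ring
  have b1 : ∀ t ∈ Set.Icc (0 : ℝ) 1, ‖g' t‖ ≤ C * t := by
    intro t ht
    refine image_norm_le_of_norm_deriv_right_le_deriv_boundary (a := 0) (b := 1)
      (f := g') (f' := g'') (B := fun t => C * t) (B' := fun _ => C)
      (fun s hs => (hg' s hs).continuousAt.continuousWithinAt)
      (fun s hs => (hg' s ⟨hs.1, hs.2.le⟩).hasDerivWithinAt) ?_ ?_
      (fun s hs => b2 s ⟨hs.1, hs.2.le⟩) ht
    · simp [g', hf'0]
    · intro s
      simpa using (hasDerivAt_id s).const_mul C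
  have b0 : ‖g 1‖ ≤ C / 2 * 1 ^ 2 := by
    refine image_norm_le_of_norm_deriv_right_le_deriv_boundary (a := 0) (b := 1)
      (f := g) (f' := g') (B := fun t => C / 2 * t ^ 2) (B' := fun t => C * t)
      (fun s hs => (hg s hs).continuousAt.continuousWithinAt)
      (fun s hs => (hg s ⟨hs.1, hs.2.le⟩).hasDerivWithinAt) ?_ ?_
      (fun s hs => b1 s ⟨hs.1, hs.2.le⟩) (Set.right_mem_Icc.2 zero_le_one)
    · simp [g, hf0]
    · intro s
      have h := (hasDerivAt_pow 2 s).const_mul (C / 2)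
      have e : C / 2 * (((2 : ℕ) : ℝ) * s ^ (2 - 1)) = C * s := by
        norm_num
        ring
      exact h.congr_deriv e
  simp only [g, one_smul] at b0
  calc _ ≤ _ := b0
    _ = _ := by rw [hC]; ring
end

section
/- Let X and Y be linear subspaces of ℝⁿ with dim X = dim Y. Define δ(X, Y) = sup{ dist(x, Y) : x ∈ X, ‖x‖ ≤ 1 }. Then δ(X, Y) = δ(Y, X). -/
theorem gap_infDist {n : ℕ} (Y : Submodule ℝ (EuclideanSpace ℝ (Fin n)))
    (x : EuclideanSpace ℝ (Fin n)) :
    Metric.infDist x (Y : Set (EuclideanSpace ℝ (Fin n))) = ‖x - Y.starProjection x‖ := by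
  rw [Submodule.starProjection_minimal, Metric.infDist_eq_iInf]
  simp only [dist_eq_norm]
  rfl

theorem gap_pyth {n : ℕ} (Y : Submodule ℝ (EuclideanSpace ℝ (Fin n)))
    (x : EuclideanSpace ℝ (Fin n)) :
    ‖x‖ ^ 2 = ‖Y.starProjection x‖ ^ 2 + ‖x - Y.starProjection x‖ ^ 2 := by
  rw [Submodule.norm_sq_eq_add_norm_sq_starProjection x Y,
    Submodule.starProjection_orthogonal_val]

theorem gap_key {n : ℕ} (X Y : Submodule ℝ (EuclideanSpace ℝ (Fin n)))
    (hdim : Module.finrank ℝ X = Module.finrank ℝ Y) (d : ℝ) (hd : 0 ≤ d)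
    (h : ∀ x ∈ X, ‖x - Y.starProjection x‖ ≤ d * ‖x‖) (y : EuclideanSpace ℝ (Fin n))
    (hy : y ∈ Y) : ‖y - X.starProjection y‖ ≤ d * ‖y‖ := by
  have hpy := gap_pyth X y
  rcases le_or_gt 1 d with h1 | h1
  · have : ‖y - X.starProjection y‖ ≤ ‖y‖ := by
      refine (sq_le_sq₀ (norm_nonneg _) (norm_nonneg _)).1 ?_
      nlinarith [sq_nonneg ‖X.starProjection y‖]
    nlinarith [norm_nonneg y]
  have hlow : ∀ x ∈ X, (1 - d ^ 2) * ‖x‖ ^ 2 ≤ ‖Y.starProjection x‖ ^ 2 := by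
    intro x hx
    have := gap_pyth Y x
    have h2 := pow_le_pow_left₀ (norm_nonneg _) (h x hx) 2
    nlinarith
  have hd2 : 0 < 1 - d ^ 2 := by nlinarith
  let A : X →ₗ[ℝ] Y := (Y.orthogonalProjectionOnto : _ →ₗ[ℝ] Y) ∘ₗ X.subtype
  have hA : ∀ x : X, ((A x : Y) : EuclideanSpace ℝ (Fin n)) = Y.starProjection x := fun x => rfl
  have hinj : Function.Injective A := by
    rw [injective_iff_map_eq_zero]
    intro x hx
    have h2 := hlow x x.2
    rw [← hA, hx] at h2
    simp only [ZeroMemClass.coe_zero, norm_zero] at h2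
    have h3 : ‖(x : EuclideanSpace ℝ (Fin n))‖ ^ 2 = 0 := by
      apply le_antisymm _ (sq_nonneg _)
      by_contra hc
      push Not at hc
      nlinarith [mul_pos hd2 hc]
    have h4 := norm_eq_zero.1 (pow_eq_zero_iff (two_ne_zero) |>.1 h3)
    exact Subtype.ext h4
  obtain ⟨x, hx⟩ := (LinearMap.injective_iff_surjective_of_finrank_eq_finrank hdim).1 hinj ⟨y, hy⟩
  have hxy : Y.starProjection (x : EuclideanSpace ℝ (Fin n)) = y := by rw [← hA, hx]
  have hl := hlow x x.2
  rw [hxy] at hl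
  have hin : ‖y‖ ^ 2 ≤ ‖X.starProjection y‖ * ‖(x : EuclideanSpace ℝ (Fin n))‖ := by
    have e1 : inner ℝ (X.starProjection y) (x : EuclideanSpace ℝ (Fin n)) = ‖y‖ ^ 2 := by
      rw [Submodule.inner_starProjection_left_eq_right,
        Submodule.starProjection_eq_self_iff.2 x.2, ← real_inner_self_eq_norm_sq]
      nth_rewrite 3 [← hxy]
      rw [← Submodule.inner_starProjection_left_eq_right,
        Submodule.starProjection_eq_self_iff.2 hy]
    rw [← e1]
    exact real_inner_le_norm _ _
  have hfin : (1 - d ^ 2) * ‖y‖ ^ 2 ≤ ‖X.starProjection y‖ ^ 2 := by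
    rcases eq_or_lt_of_le (norm_nonneg y) with h0 | h0
    · rw [← h0]; simp
    have hx0 : 0 < ‖(x : EuclideanSpace ℝ (Fin n))‖ ^ 2 := by
      rcases eq_or_lt_of_le (norm_nonneg (x : EuclideanSpace ℝ (Fin n))) with h5 | h5
      · rw [← h5] at hin
        nlinarith
      · positivity
    refine le_of_mul_le_mul_right ?_ hx0
    have h6 := pow_le_pow_left₀ (sq_nonneg _) hin 2
    have h7 := mul_le_mul_of_nonneg_left hl (sq_nonneg ‖y‖)
    nlinarith
  refine (sq_le_sq₀ (norm_nonneg _) (by positivity)).1 ?_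
  nlinarith

theorem gap_le {n : ℕ} (X Y : Submodule ℝ (EuclideanSpace ℝ (Fin n)))
    (hdim : Module.finrank ℝ X = Module.finrank ℝ Y) :
    sSup ((fun y => Metric.infDist y (X : Set (EuclideanSpace ℝ (Fin n)))) ''
        {y : EuclideanSpace ℝ (Fin n) | y ∈ Y ∧ ‖y‖ ≤ 1}) ≤
    sSup ((fun x => Metric.infDist x (Y : Set (EuclideanSpace ℝ (Fin n)))) ''
        {x : EuclideanSpace ℝ (Fin n) | x ∈ X ∧ ‖x‖ ≤ 1}) := by
  have hbdd : BddAbove ((fun x => Metric.infDist x (Y : Set (EuclideanSpace ℝ (Fin n)))) ''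
        {x : EuclideanSpace ℝ (Fin n) | x ∈ X ∧ ‖x‖ ≤ 1}) := by
    refine ⟨1, ?_⟩
    rintro _ ⟨x, ⟨-, hx⟩, rfl⟩
    have := Metric.infDist_le_dist_of_mem (x := x) Y.zero_mem
    rw [dist_zero_right] at this
    exact this.trans hx
  set d := sSup ((fun x => Metric.infDist x (Y : Set (EuclideanSpace ℝ (Fin n)))) ''
        {x : EuclideanSpace ℝ (Fin n) | x ∈ X ∧ ‖x‖ ≤ 1}) with hdd
  have hle : ∀ x ∈ X, ‖x‖ ≤ 1 → ‖x - Y.starProjection x‖ ≤ d := by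
    intro x hx h1
    rw [← gap_infDist]
    exact le_csSup hbdd ⟨x, ⟨hx, h1⟩, rfl⟩
  have hd : 0 ≤ d := (norm_nonneg _).trans (hle 0 X.zero_mem (by simp))
  have h : ∀ x ∈ X, ‖x - Y.starProjection x‖ ≤ d * ‖x‖ := by
    intro x hx
    rcases eq_or_ne x 0 with rfl | h0
    · simp
    have hp : 0 < ‖x‖ := norm_pos_iff.2 h0
    have h2 := hle (‖x‖⁻¹ • x) (X.smul_mem _ hx) (by
      rw [norm_smul, norm_inv, norm_norm, inv_mul_cancel₀ hp.ne'])
    rw [map_smul, ← smul_sub, norm_smul, norm_inv, norm_norm, inv_mul_le_iff₀ hp] at h2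
    linarith
  apply csSup_le
  · exact ⟨_, 0, ⟨Y.zero_mem, by simp⟩, rfl⟩
  rintro _ ⟨y, ⟨hy, h1⟩, rfl⟩
  have := gap_key X Y hdim d hd h y hy
  simp only [gap_infDist]
  nlinarith


/-- for linear subspaces X, Y of ℝⁿ of the same dimension,
    δ(X, Y) = sup{ dist(x, Y) : x ∈ X, ‖x‖ ≤ 1 } is symmetric. -/
theorem subspace_gap_symm {n : ℕ}
    (X Y : Submodule ℝ (EuclideanSpace ℝ (Fin n)))
    (hdim : Module.finrank ℝ X = Module.finrank ℝ Y) :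
    sSup ((fun x => Metric.infDist x (Y : Set (EuclideanSpace ℝ (Fin n)))) ''
        {x : EuclideanSpace ℝ (Fin n) | x ∈ X ∧ ‖x‖ ≤ 1}) =
    sSup ((fun y => Metric.infDist y (X : Set (EuclideanSpace ℝ (Fin n)))) ''
        {y : EuclideanSpace ℝ (Fin n) | y ∈ Y ∧ ‖y‖ ≤ 1}) := by
  exact le_antisymm (gap_le Y X hdim.symm) (gap_le X Y hdim)
end

section
/- Let σ, τ, δ, Γ, κ₀, κ₁ be positive real numbers with κ₀ ≤ κ₁ and Γ·κ₁ < 1, and suppose σ·log(κ₁/κ₀) ≤ δτ·√(2·log(1/(Γ·κ₁))). Then √(2σ²·log(1/(Γ·κ₀))) − (−δτ + √(2σ²·log(1/(Γ·κ₁)))) ≤ 2τδ. -/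
/-- the Gap bound. If σ·log(κ₁/κ₀) ≤ δτ·√(2·log(1/(Γκ₁))), then
    √(2σ²·log(1/(Γκ₀))) − (−δτ + √(2σ²·log(1/(Γκ₁)))) ≤ 2τδ. -/
theorem gap_bound (σ τ δ Γ κ₀ κ₁ : ℝ)
    (hσ : 0 < σ) (hτ : 0 < τ) (hδ : 0 < δ) (hΓ : 0 < Γ)
    (hκ₀ : 0 < κ₀) (hκ₁ : 0 < κ₁) (hκ : κ₀ ≤ κ₁) (hΓκ₁ : Γ * κ₁ < 1)
    (hcond : σ * Real.log (κ₁ / κ₀) ≤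
      δ * τ * Real.sqrt (2 * Real.log (1 / (Γ * κ₁)))) :
    Real.sqrt (2 * σ ^ 2 * Real.log (1 / (Γ * κ₀))) -
      (-(δ * τ) + Real.sqrt (2 * σ ^ 2 * Real.log (1 / (Γ * κ₁)))) ≤ 2 * τ * δ := by
  have hL : 0 < Real.log (1 / (Γ * κ₁)) := by
    apply Real.log_pos
    rw [lt_div_iff₀ (by positivity)]
    linarith
  have hD : Real.log (1 / (Γ * κ₀)) = Real.log (1 / (Γ * κ₁)) + Real.log (κ₁ / κ₀) := by
    rw [← Real.log_mul (by positivity) (by positivity)]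
    congr 1
    field_simp
  rw [hD]
  generalize Real.log (1 / (Γ * κ₁)) = L at *
  generalize Real.log (κ₁ / κ₀) = D at *
  have h1 : Real.sqrt (2 * σ ^ 2 * L) = σ * Real.sqrt (2 * L) := by
    rw [show 2 * σ ^ 2 * L = σ ^ 2 * (2 * L) by ring, Real.sqrt_mul (by positivity),
      Real.sqrt_sq hσ.le]
  rw [h1]
  have hs : Real.sqrt (2 * L) ^ 2 = 2 * L := Real.sq_sqrt (by positivity)
  have hs0 : 0 ≤ Real.sqrt (2 * L) := Real.sqrt_nonneg _
  generalize Real.sqrt (2 * L) = s at *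
  have h2 : Real.sqrt (2 * σ ^ 2 * (L + D)) ≤ δ * τ + σ * s := by
    apply Real.sqrt_le_iff.mpr
    refine ⟨by positivity, ?_⟩
    have h3 := mul_le_mul_of_nonneg_left hcond hσ.le
    have h4 : σ ^ 2 * s ^ 2 = σ ^ 2 * (2 * L) := by rw [hs]
    nlinarith [sq_nonneg (δ * τ)]
  linarith
end
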